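/- arXiv:2406.01350 — 2 statements merged into one kernel-verified Lean document; each statement's English description precedes it below -/
import Mathlib

section
/- On three qubits, no list of exactly three CNOT gates has composition equal to the cyclic-shift permutation gate x ↦ x ∘ c, where c : Fin 3 → Fin 3 is the 3-cycle sending j to j+1 (mod 3). -/
/-- The CNOT gate with control `a` and target `b` acting on computational
basis states of an `n`-qubit system. -/
def CNOT {n : ℕ} (a b : Fin n) (x : Fin n → Bool) : Fin n → Bool :=
  fun j => if j = b then xor (x a) (x b) else x j

/-- The composition of a list of CNOT gates, applied in order. -/
def circuit {n : ℕ} (L : List (Fin n × Fin n)) (x : Fin n → Bool) : Fin n → Bool :=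
  L.foldl (fun y g => CNOT g.1 g.2 y) x

/-!
Every qubit moved by the realized map must be the target of some gate. The target `b` of the first
gate must be targeted again: otherwise its final value would be `x a ⊕ x b`, which vanishes on the
all-ones state, whereas relabelling the qubits fixes that state. So the gates after the first one
already target every moved qubit, and there are more gates than moved qubits.
-/

section

variable {n : ℕ}

theorem circuit_cons (g : Fin n × Fin n) (L : List (Fin n × Fin n)) (x : Fin n → Bool) :
    circuit (g :: L) x = circuit L (CNOT g.1 g.2 x) :=
  rfl

theorem circuit_apply_of_notMem_targets {L : List (Fin n × Fin n)} {j : Fin n}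
    (hj : j ∉ L.map Prod.snd) (x : Fin n → Bool) : circuit L x j = x j := by
  induction L generalizing x with
  | nil => rfl
  | cons g L ih =>
    rw [List.map_cons, List.mem_cons, not_or] at hj
    rw [circuit_cons, ih hj.2, CNOT, if_neg hj.1]

theorem mem_targets_of_circuit_eq_comp {L : List (Fin n × Fin n)} {f : Fin n → Fin n}
    (h : circuit L = fun x => x ∘ f) {j : Fin n} (hj : f j ≠ j) : j ∈ L.map Prod.snd := by
  by_contra hmem
  have hinv := circuit_apply_of_notMem_targets hmem fun k => decide (k = j)
  simp [h, hj] at hinv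

theorem head_target_mem_tail_targets_of_circuit_eq_comp {g : Fin n × Fin n}
    {L : List (Fin n × Fin n)} {f : Fin n → Fin n} (h : circuit (g :: L) = fun x => x ∘ f) :
    g.2 ∈ L.map Prod.snd := by
  by_contra hmem
  have h_false : circuit (g :: L) (fun _ => true) g.2 = false := by
    rw [circuit_cons, circuit_apply_of_notMem_targets hmem]
    simp [CNOT]
  have h_true : circuit (g :: L) (fun _ => true) g.2 = true := by rw [h]; rfl
  exact Bool.false_ne_true (h_false.symm.trans h_true)

theorem no_three_cnot_cycle3_general {L : List (Fin n × Fin n)} {f : Fin n → Fin n}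
    (h : circuit L = fun x => x ∘ f) (hf : f ≠ id) :
    ({j | f j ≠ j} : Finset (Fin n)).card < L.length := by
  obtain ⟨i, hi⟩ := Function.ne_iff.mp hf
  obtain _ | ⟨g, L⟩ := L
  · exact absurd (mem_targets_of_circuit_eq_comp h hi) List.not_mem_nil
  have h_subset : ({j | f j ≠ j} : Finset (Fin n)) ⊆ (L.map Prod.snd).toFinset := by
    intro j hj
    rw [List.mem_toFinset]
    have h_mem := mem_targets_of_circuit_eq_comp h (Finset.mem_filter.mp hj).2
    obtain rfl | h_tail := List.mem_cons.mp h_mem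
    · exact head_target_mem_tail_targets_of_circuit_eq_comp h
    · exact h_tail
  calc ({j | f j ≠ j} : Finset (Fin n)).card
      ≤ (L.map Prod.snd).toFinset.card := Finset.card_le_card h_subset
    _ ≤ (L.map Prod.snd).length := List.toFinset_card_le _
    _ = L.length := List.length_map _
    _ < (g :: L).length := Nat.lt_succ_self _

end

/-- On three qubits, no list of exactly three CNOT gates realizes the cyclic shift
`j ↦ j + 1 (mod 3)`. -/
theorem no_three_cnot_cycle3 (L : List (Fin 3 × Fin 3))
    (hL : ∀ g ∈ L, g.1 ≠ g.2) (hlen : L.length = 3) :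
    circuit L ≠ fun x => x ∘ (finRotate 3) := by
  have h_moved : ({j | finRotate 3 j ≠ j} : Finset (Fin 3)).card = 3 := by decide
  exact fun h => (no_three_cnot_cycle3_general h (by decide)).ne (h_moved.trans hlen.symm)
end

section
/- For every n ≥ 1 and every permutation σ of Fin n, there exists a list of at most 3(n-1) CNOT gates on n qubits whose composition equals the permutation gate x ↦ x ∘ σ. -/
/-!
Three alternating CNOT gates on a pair of qubits exchange them: they are the classical XOR swap.
So it suffices to factor `σ` into few transpositions. A `k`-cycle is a product of `k - 1` of them,
hence `σ` is a product of `#σ.support - c` transpositions, where `c` is the number of its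
nontrivial cycles, and `c ≥ 1` unless `σ = 1`.
-/

open Equiv
open scoped Finset

section Transpositions

variable {α : Type*} [DecidableEq α]

theorem isSwap_of_mem_zipWith_swap_tail {l : List α} (hl : l.Nodup) {τ : Perm α}
    (hτ : τ ∈ List.zipWith swap l l.tail) : τ.IsSwap := by
  obtain ⟨i, hi, rfl⟩ := List.getElem_of_mem hτ
  simp only [List.length_zipWith, List.length_tail] at hi
  simp only [List.getElem_zipWith, List.getElem_tail]
  refine ⟨_, _, fun h => ?_, rfl⟩
  have index_eq := hl.getElem_inj_iff.mp h
  omega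

variable [Fintype α]

theorem exists_list_isSwap_prod_eq_of_isCycle {σ : Perm α} (hσ : σ.IsCycle) :
    ∃ l : List (Perm α), (∀ τ ∈ l, τ.IsSwap) ∧ l.length + 1 = #σ.support ∧ l.prod = σ := by
  obtain ⟨x, hx⟩ := hσ.nonempty_support
  have hcycle : σ.cycleOf x = σ := hσ.cycleOf_eq (Perm.mem_support.mp hx)
  have hlength : (σ.toList x).length = #σ.support := by rw [Perm.length_toList, hcycle]
  refine ⟨List.zipWith swap (σ.toList x) (σ.toList x).tail,
    fun _ => isSwap_of_mem_zipWith_swap_tail (σ.nodup_toList x), ?_, ?_⟩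
  · have two_le := hσ.two_le_card_support
    simp only [List.length_zipWith, List.length_tail]
    omega
  · -- `List.formPerm l` unfolds to `(List.zipWith swap l l.tail).prod`.
    exact (σ.formPerm_toList x).trans hcycle

theorem exists_list_isSwap_prod_eq (σ : Perm α) :
    ∃ l : List (Perm α), (∀ τ ∈ l, τ.IsSwap) ∧ l.length + σ.cycleType.card = #σ.support ∧
      l.prod = σ := by
  induction σ using Perm.cycle_induction_on with
  | base_one => exact ⟨[], by simp⟩
  | base_cycles σ hσ =>
    simpa only [hσ.cycleType, Multiset.card_singleton] using
      exists_list_isSwap_prod_eq_of_isCycle hσ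
  | induction_disjoint σ τ hdisj _ ihσ ihτ =>
    obtain ⟨l, hl, hl_length, hl_prod⟩ := ihσ
    obtain ⟨m, hm, hm_length, hm_prod⟩ := ihτ
    refine ⟨l ++ m, List.forall_mem_append.mpr ⟨hl, hm⟩, ?_,
      by rw [List.prod_append, hl_prod, hm_prod]⟩
    rw [List.length_append, hdisj.cycleType_mul, Multiset.card_add, hdisj.card_support_mul]
    omega

theorem card_support_sub_card_cycleType_le (σ : Perm α) :
    #σ.support - σ.cycleType.card ≤ Fintype.card α - 1 := by
  obtain rfl | hσ := eq_or_ne σ 1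
  · simp
  · exact tsub_le_tsub (Finset.card_le_univ _) (Perm.card_cycleType_pos.mpr hσ)

end Transpositions

section Circuits

variable {n : ℕ}

theorem CNOT_eq_update (a b : Fin n) (x : Fin n → Bool) :
    CNOT a b x = Function.update x b (xor (x a) (x b)) := by
  ext j
  rw [CNOT, Function.update_apply]

theorem circuit_append (L M : List (Fin n × Fin n)) (x : Fin n → Bool) :
    circuit (L ++ M) x = circuit M (circuit L x) :=
  List.foldl_append

/-- `L` is a CNOT circuit, every gate having distinct control and target, that realizes the
permutation gate of `σ`. -/
structure Realizes (L : List (Fin n × Fin n)) (σ : Perm (Fin n)) : Prop where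
  ne : ∀ g ∈ L, g.1 ≠ g.2
  circuit_eq : circuit L = fun x => x ∘ σ

/-- The three alternating CNOT gates that exchange the qubits `a` and `b`. -/
def swapCircuit (a b : Fin n) : List (Fin n × Fin n) :=
  [(a, b), (b, a), (a, b)]

theorem circuit_swapCircuit {a b : Fin n} (hab : a ≠ b) (x : Fin n → Bool) :
    circuit (swapCircuit a b) x = x ∘ swap a b := by
  calc circuit (swapCircuit a b) x
    _ = CNOT a b (CNOT b a (CNOT a b x)) := rfl
    _ = CNOT a b (CNOT b a (Function.update x b (xor (x a) (x b)))) := by rw [CNOT_eq_update a b x]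
    _ = CNOT a b (Function.update (Function.update x b (xor (x a) (x b))) a (x b)) := by
      simp [CNOT_eq_update b a, hab, Bool.xor_comm (x a)]
    _ = Function.update (Function.update x b (x a)) a (x b) := by
      simp [CNOT_eq_update a b, hab.symm, Function.update_comm hab, Bool.xor_left_comm (x b)]
    _ = x ∘ swap a b := (comp_swap_eq_update a b x).symm

namespace Realizes

theorem nil : Realizes [] (1 : Perm (Fin n)) :=
  ⟨by simp, rfl⟩

theorem append {L M : List (Fin n × Fin n)} {σ τ : Perm (Fin n)} (hL : Realizes L σ)
    (hM : Realizes M τ) : Realizes (L ++ M) (σ * τ) where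
  ne := List.forall_mem_append.mpr ⟨hL.ne, hM.ne⟩
  circuit_eq := by
    funext x
    rw [circuit_append, hL.circuit_eq, hM.circuit_eq]
    rfl

end Realizes

theorem realizes_swapCircuit {a b : Fin n} (hab : a ≠ b) :
    Realizes (swapCircuit a b) (swap a b) where
  ne := by simp [swapCircuit, hab, hab.symm]
  circuit_eq := funext (circuit_swapCircuit hab)

theorem exists_realizes_prod_of_isSwap {l : List (Perm (Fin n))} (hl : ∀ τ ∈ l, τ.IsSwap) :
    ∃ L, Realizes L l.prod ∧ L.length = 3 * l.length := by
  induction l with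
  | nil => exact ⟨[], .nil, rfl⟩
  | cons τ l ih =>
    obtain ⟨⟨a, b, hab, rfl⟩, hl_tail⟩ := List.forall_mem_cons.mp hl
    obtain ⟨L, hL, hL_length⟩ := ih hl_tail
    refine ⟨swapCircuit a b ++ L, ?_, ?_⟩
    · rw [List.prod_cons]
      exact (realizes_swapCircuit hab).append hL
    · simp only [swapCircuit, List.length_append, List.length_cons, List.length_nil]
      omega

end Circuits

theorem perm_cnot_le_general {n : ℕ} (σ : Perm (Fin n)) :
    ∃ L : List (Fin n × Fin n), (∀ g ∈ L, g.1 ≠ g.2) ∧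
      L.length = 3 * (#σ.support - σ.cycleType.card) ∧ circuit L = fun x => x ∘ σ := by
  obtain ⟨l, hl, hl_length, rfl⟩ := exists_list_isSwap_prod_eq σ
  obtain ⟨L, hL, hL_length⟩ := exists_realizes_prod_of_isSwap hl
  exact ⟨L, hL.ne, by omega, hL.circuit_eq⟩

/-- Every permutation of `n ≥ 1` qubits can be realized by at most `3(n-1)` CNOT gates. -/
theorem perm_cnot_le (n : ℕ) (hn : 1 ≤ n) (σ : Equiv.Perm (Fin n)) :
    ∃ L : List (Fin n × Fin n), (∀ g ∈ L, g.1 ≠ g.2) ∧ L.length ≤ 3 * (n - 1) ∧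
      circuit L = fun x => x ∘ σ := by
  obtain ⟨L, hL, hlength, hcircuit⟩ := perm_cnot_le_general σ
  exact ⟨L, hL, by simpa [hlength] using card_support_sub_card_cycleType_le σ, hcircuit⟩
end
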